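/- For integer n ≥ 2, lim_{t→0⁺} tⁿ · ∑_{w=n-1}^∞ w^{n-1} · (1/(1-e^{-2tw})^{n-1} - 1) = ∫₀^∞ x^{n-1} (1/(1-e^{-2x})^{n-1} - 1) dx. -/

import Mathlib

open Filter Real Set MeasureTheory

/-!
The left-hand side is `t * ∑' w, f (t * (w + n - 1))` with
`f x = x ^ (n - 1) * (1 / (1 - exp (-2 * x)) ^ (n - 1) - 1)`: a Riemann sum for the improper
integral of `f`, in which the cell `[t * w, t * (w + 1))` is sampled at `t * (w + n - 1)`. It is
the integral over `(0, ∞)` of a step function converging pointwise to `f` as `t → 0`. No sample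
point lies to the left of a point of its cell, so a decreasing integrable majorant of `|f|` also
dominates all the step functions, and dominated convergence applies. Such a majorant is
`C * exp (-x)`, because `x / (1 - exp (-2 * x)) ≤ 1 / 2 + x` and, by Bernoulli's inequality,
`1 - (1 - q) ^ m ≤ m * q`.
-/

section RiemannSum

variable {t : ℝ}

lemma add_mul_sub_one_le_mul_floor_div_add (ht : 0 < t) (y c : ℝ) :
    y + t * (c - 1) ≤ t * (⌊y / t⌋₊ + c) := by
  have h : y ≤ (⌊y / t⌋₊ + 1) * t := (div_le_iff₀ ht).1 (Nat.lt_floor_add_one _).le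
  linarith

lemma mul_floor_div_add_le (ht : 0 < t) {y : ℝ} (hy : 0 ≤ y) (c : ℝ) :
    t * (⌊y / t⌋₊ + c) ≤ y + t * c := by
  have h : ⌊y / t⌋₊ * t ≤ y := (le_div_iff₀ ht).1 (Nat.floor_le (by positivity))
  linarith

lemma tendsto_mul_floor_div_add {y : ℝ} (hy : 0 ≤ y) (c : ℝ) :
    Tendsto (fun t : ℝ => t * (⌊y / t⌋₊ + c)) (nhdsWithin 0 (Ioi 0)) (nhds y) := by
  have tendsto_add_mul (b : ℝ) :
      Tendsto (fun t : ℝ => y + t * b) (nhdsWithin 0 (Ioi 0)) (nhds y) := by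
    have h : Continuous fun t : ℝ => y + t * b := by fun_prop
    simpa using (h.tendsto 0).mono_left nhdsWithin_le_nhds
  refine tendsto_of_tendsto_of_tendsto_of_le_of_le' (tendsto_add_mul (c - 1))
    (tendsto_add_mul c) ?_ ?_
  · filter_upwards [self_mem_nhdsWithin] with t ht
    exact add_mul_sub_one_le_mul_floor_div_add ht y c
  · filter_upwards [self_mem_nhdsWithin] with t ht
    exact mul_floor_div_add_le ht hy c

lemma preimage_floor_div_inter_Ici (ht : 0 < t) (k : ℕ) :
    (fun y : ℝ => ⌊y / t⌋₊) ⁻¹' {k} ∩ Ici 0 = Ico (k * t) ((k + 1) * t) := by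
  ext y
  constructor
  · rintro ⟨hk, hy⟩
    obtain ⟨h₁, h₂⟩ := (Nat.floor_eq_iff (div_nonneg hy ht.le)).1 hk
    exact ⟨(le_div_iff₀ ht).1 h₁, (div_lt_iff₀ ht).1 h₂⟩
  · rintro ⟨h₁, h₂⟩
    have hy : 0 ≤ y := le_trans (by positivity) h₁
    exact ⟨(Nat.floor_eq_iff (by positivity)).2
      ⟨(le_div_iff₀ ht).2 h₁, (div_lt_iff₀ ht).2 h₂⟩, hy⟩

lemma measurable_floor_div (t : ℝ) : Measurable fun y : ℝ => ⌊y / t⌋₊ :=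
  Nat.measurable_floor.comp (measurable_id.div_const t)

lemma map_floor_div_volume_restrict_Ioi (ht : 0 < t) :
    (volume.restrict (Ioi (0 : ℝ))).map (fun y => ⌊y / t⌋₊) =
      ENNReal.ofReal t • Measure.count := by
  refine Measure.ext_of_singleton fun k => ?_
  rw [Measure.map_apply (measurable_floor_div t) (measurableSet_singleton k),
    restrict_Ioi_eq_restrict_Ici,
    Measure.restrict_apply (measurable_floor_div t (measurableSet_singleton k)),
    preimage_floor_div_inter_Ici ht, Real.volume_Ico, Measure.smul_apply, Measure.count_singleton,
    smul_eq_mul, mul_one, ← sub_mul, add_sub_cancel_left, one_mul]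

variable {E : Type*} [NormedAddCommGroup E] {f : ℝ → E} {g : ℝ → ℝ} {c : ℝ}

lemma stronglyMeasurable_comp_floor_div (u : ℕ → E) (t : ℝ) :
    StronglyMeasurable fun y : ℝ => u ⌊y / t⌋₊ :=
  (StronglyMeasurable.of_discrete (f := u)).comp_measurable (measurable_floor_div t)

lemma norm_comp_mul_floor_div_add_le (hfg : ∀ x > 0, ‖f x‖ ≤ g x) (hg : AntitoneOn g (Ioi 0))
    (hc : 1 ≤ c) (ht : 0 < t) {y : ℝ} (hy : 0 < y) :
    ‖f (t * (⌊y / t⌋₊ + c))‖ ≤ g y := by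
  have hle : y ≤ t * (⌊y / t⌋₊ + c) :=
    (le_add_of_nonneg_right (mul_nonneg ht.le (sub_nonneg.2 hc))).trans
      (add_mul_sub_one_le_mul_floor_div_add ht y c)
  exact (hfg _ (hy.trans_le hle)).trans (hg hy (hy.trans_le hle) hle)

variable [NormedSpace ℝ E] [CompleteSpace E]

lemma setIntegral_Ioi_comp_floor_div (ht : 0 < t) {u : ℕ → E}
    (hu : IntegrableOn (fun y : ℝ => u ⌊y / t⌋₊) (Ioi 0)) :
    ∫ y in Ioi (0 : ℝ), u ⌊y / t⌋₊ = t • ∑' w, u w := by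
  have hmeas : AEMeasurable (fun y : ℝ => ⌊y / t⌋₊) (volume.restrict (Ioi 0)) :=
    (measurable_floor_div t).aemeasurable
  have hu_meas {μ : Measure ℕ} : AEStronglyMeasurable u μ :=
    StronglyMeasurable.of_discrete.aestronglyMeasurable
  have hu_count : Integrable u Measure.count := by
    have h := (integrable_map_measure hu_meas hmeas).2 hu
    rw [map_floor_div_volume_restrict_Ioi ht] at h
    exact (integrable_smul_measure (by simpa using ht) ENNReal.ofReal_ne_top).1 h
  rw [← integral_map hmeas hu_meas, map_floor_div_volume_restrict_Ioi ht, integral_smul_measure,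
    ENNReal.toReal_ofReal ht.le, integral_countable hu_count]
  simp [measureReal_def]

theorem tendsto_smul_tsum_comp_mul_add
    (hf : ∀ᵐ x ∂volume.restrict (Ioi 0), ContinuousAt f x) (hfg : ∀ x > 0, ‖f x‖ ≤ g x)
    (hg : AntitoneOn g (Ioi 0)) (hg_int : IntegrableOn g (Ioi 0)) (hc : 1 ≤ c) :
    Tendsto (fun t : ℝ => t • ∑' w : ℕ, f (t * (w + c))) (nhdsWithin 0 (Ioi 0))
      (nhds (∫ x in Ioi 0, f x)) := by
  have hmeas (t : ℝ) : AEStronglyMeasurable (fun y : ℝ => f (t * (⌊y / t⌋₊ + c)))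
      (volume.restrict (Ioi 0)) :=
    (stronglyMeasurable_comp_floor_div (fun w => f (t * (w + c))) t).aestronglyMeasurable
  have hbound {t : ℝ} (ht : 0 < t) :
      ∀ᵐ y ∂volume.restrict (Ioi 0), ‖f (t * (⌊y / t⌋₊ + c))‖ ≤ g y := by
    filter_upwards [ae_restrict_mem measurableSet_Ioi] with y hy
    exact norm_comp_mul_floor_div_add_le hfg hg hc ht hy
  have hlim : Tendsto (fun t : ℝ => ∫ y in Ioi 0, f (t * (⌊y / t⌋₊ + c)))
      (nhdsWithin 0 (Ioi 0)) (nhds (∫ x in Ioi 0, f x)) := by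
    refine tendsto_integral_filter_of_dominated_convergence g (.of_forall hmeas) ?_ hg_int ?_
    · filter_upwards [self_mem_nhdsWithin] with t ht using hbound ht
    · filter_upwards [hf, ae_restrict_mem measurableSet_Ioi] with y hfy hy
      exact hfy.tendsto.comp (tendsto_mul_floor_div_add (le_of_lt hy) c)
  refine hlim.congr' ?_
  filter_upwards [self_mem_nhdsWithin] with t ht
  exact setIntegral_Ioi_comp_floor_div ht (u := fun w => f (t * (w + c)))
    (hg_int.mono' (hmeas t) (hbound ht))

end RiemannSum

section BoseWeight

/-- The integrand of the limit, with a general rate `a` in place of `2`. The factor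
`1 / (1 - exp (-a * x)) ^ m` is the partition function of `m` bosonic oscillators of energy `a * x`,
and subtracting `1` removes their ground state. -/
noncomputable def boseWeight (a : ℝ) (m : ℕ) (x : ℝ) : ℝ :=
  x ^ m * (1 / (1 - exp (-a * x)) ^ m - 1)

variable {a x : ℝ}

lemma one_sub_exp_neg_mul_pos (ha : 0 < a) (hx : 0 < x) : 0 < 1 - exp (-a * x) := by
  have : 0 < a * x := by positivity
  simpa

lemma continuousAt_boseWeight (ha : 0 < a) (m : ℕ) (hx : 0 < x) :
    ContinuousAt (boseWeight a m) x := by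
  have h : (1 - exp (-a * x)) ^ m ≠ 0 := (pow_pos (one_sub_exp_neg_mul_pos ha hx) m).ne'
  unfold boseWeight
  fun_prop (disch := assumption)

lemma boseWeight_nonneg (ha : 0 < a) (m : ℕ) (hx : 0 < x) : 0 ≤ boseWeight a m x := by
  have hpos := one_sub_exp_neg_mul_pos ha hx
  have hpow : (1 - exp (-a * x)) ^ m ≤ 1 :=
    pow_le_one₀ hpos.le (sub_le_self 1 (exp_pos _).le)
  exact mul_nonneg (pow_nonneg hx.le m) (sub_nonneg.2 (one_le_one_div (pow_pos hpos m) hpow))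

lemma boseWeight_eq_one_sub_pow_mul_div_pow (ha : 0 < a) (m : ℕ) (hx : 0 < x) :
    boseWeight a m x = (1 - (1 - exp (-a * x)) ^ m) * (x / (1 - exp (-a * x))) ^ m := by
  have h : (1 - exp (-a * x)) ^ m ≠ 0 := (pow_pos (one_sub_exp_neg_mul_pos ha hx) m).ne'
  rw [boseWeight, one_div, div_pow, div_eq_mul_inv]
  linear_combination x ^ m * mul_inv_cancel₀ h

lemma div_one_sub_exp_neg_mul_le (ha : 0 < a) (hx : 0 < x) :
    x / (1 - exp (-a * x)) ≤ 1 / a + x := by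
  have hexp : (a * x + 1) * exp (-a * x) ≤ 1 := by
    rw [neg_mul, exp_neg, ← div_eq_mul_inv]
    exact div_le_one_of_le₀ (add_one_le_exp _) (exp_pos _).le
  rw [div_le_iff₀ (one_sub_exp_neg_mul_pos ha hx)]
  calc x = (1 / a + x) - 1 / a * 1 := by ring
    _ ≤ (1 / a + x) - 1 / a * ((a * x + 1) * exp (-a * x)) := by gcongr
    _ = (1 / a + x) * (1 - exp (-a * x)) := by field_simp; ring

lemma boseWeight_le (ha : 0 < a) (m : ℕ) (hx : 0 < x) :
    boseWeight a m x ≤ m * exp (-a * x) * (1 / a + x) ^ m := by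
  have hpos := one_sub_exp_neg_mul_pos ha hx
  have bernoulli : 1 - (1 - exp (-a * x)) ^ m ≤ m * exp (-a * x) := by
    have h := one_add_mul_le_pow (a := -exp (-a * x)) (by linarith) m
    rw [← sub_eq_add_neg] at h
    linarith
  rw [boseWeight_eq_one_sub_pow_mul_div_pow ha m hx]
  gcongr
  exact div_one_sub_exp_neg_mul_le ha hx

lemma pow_le_factorial_div_pow_mul_exp {b y : ℝ} (hb : 0 < b) (hy : 0 ≤ y) (m : ℕ) :
    y ^ m ≤ m.factorial / b ^ m * exp (b * y) := by
  have h : (b * y) ^ m ≤ exp (b * y) * m.factorial :=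
    (div_le_iff₀ (by positivity)).1 (pow_div_factorial_le_exp (b * y) (by positivity) m)
  rw [div_mul_eq_mul_div, le_div_iff₀ (by positivity), ← mul_pow, mul_comm y]
  linarith

lemma exists_norm_boseWeight_le (ha : 0 < a) (m : ℕ) :
    ∃ C, 0 ≤ C ∧ ∀ x > 0, ‖boseWeight a m x‖ ≤ C * exp (-(a / 2) * x) := by
  set D : ℝ := m.factorial / (a / 2) ^ m
  refine ⟨m * D * exp (1 / 2), by positivity, fun x hx => ?_⟩
  rw [norm_of_nonneg (boseWeight_nonneg ha m hx)]
  calc boseWeight a m x ≤ m * exp (-a * x) * (1 / a + x) ^ m := boseWeight_le ha m hx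
    _ ≤ m * exp (-a * x) * (D * exp (a / 2 * (1 / a + x))) := by
      gcongr
      exact pow_le_factorial_div_pow_mul_exp (by positivity) (by positivity) m
    _ = m * D * (exp (-a * x) * exp (a / 2 * (1 / a + x))) := by ring
    _ = m * D * (exp (1 / 2) * exp (-(a / 2) * x)) := by
      rw [← exp_add, ← exp_add]
      congr 2
      field_simp
      ring
    _ = m * D * exp (1 / 2) * exp (-(a / 2) * x) := by ring

theorem tendsto_mul_tsum_boseWeight (ha : 0 < a) (m : ℕ) {c : ℝ} (hc : 1 ≤ c) :
    Tendsto (fun t : ℝ => t * ∑' w : ℕ, boseWeight a m (t * (w + c))) (nhdsWithin 0 (Ioi 0))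
      (nhds (∫ x in Ioi 0, boseWeight a m x)) := by
  obtain ⟨C, hC, hbound⟩ := exists_norm_boseWeight_le ha m
  refine tendsto_smul_tsum_comp_mul_add ?_ hbound (fun x _ y _ hxy => ?_)
    ((exp_neg_integrableOn_Ioi 0 (half_pos ha)).const_mul C) hc
  · filter_upwards [ae_restrict_mem measurableSet_Ioi] with x hx
    exact continuousAt_boseWeight ha m hx
  · have := mul_le_mul_of_nonneg_left hxy (half_pos ha).le
    simp only [neg_mul]
    gcongr

end BoseWeight

theorem stmt15 (n : ℕ) (hn : 2 ≤ n) :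
    Tendsto (fun t : ℝ => t ^ n * ∑' w : ℕ,
        ((w : ℝ) + n - 1) ^ (n - 1) *
          (1 / (1 - Real.exp (-2 * t * ((w : ℝ) + n - 1))) ^ (n - 1) - 1))
      (nhdsWithin 0 (Set.Ioi 0))
      (nhds (∫ x in Set.Ioi (0 : ℝ),
        x ^ (n - 1) * (1 / (1 - Real.exp (-2 * x)) ^ (n - 1) - 1))) := by
  obtain ⟨m, rfl⟩ : ∃ m, n = m + 1 := ⟨n - 1, by lia⟩
  have hm : (1 : ℝ) ≤ m := by exact_mod_cast (by lia : 1 ≤ m)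
  refine (tendsto_mul_tsum_boseWeight two_pos m hm).congr fun t => ?_
  rw [Nat.add_sub_cancel, pow_succ', mul_assoc, ← tsum_mul_left (a := t ^ m)]
  congr 1
  refine tsum_congr fun w => ?_
  have hshift : (w : ℝ) + (m + 1 : ℕ) - 1 = w + m := by push_cast; ring
  rw [hshift, boseWeight, mul_pow, mul_assoc, mul_assoc (-2) t]
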